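/- There exists an absolute constant A > 0 such that the following holds. Let C be a family of n circles in ℝ² (with arbitrary radii) such that no three circles of C are mutually tangent at a common point (i.e., there is no point p and three distinct circles of C that are pairwise tangent with p as the common tangency point). Then the number of unordered pairs of tangent circles of C is at most A · n^{3/2}. -/

import Mathlib

noncomputable section

abbrev Pt2 := EuclideanSpace ℝ (Fin 2)

/-- A circle in the plane: a metric sphere with positive radius. -/
def IsCircle2 (s : Set Pt2) : Prop :=
  ∃ c : Pt2, ∃ r : ℝ, 0 < r ∧ s = Metric.sphere c r

/-- Two subsets of the plane are tangent if they intersect in exactly one point. -/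
def Tangent2 (a b : Set Pt2) : Prop := ∃ p : Pt2, a ∩ b = {p}

/-!
An oriented circle with center `c` and signed radius `ρ` has support function `⟪c, u⟫ - ρ`, which,
cleared of denominators, is a polynomial of degree at most two in the rational parameter `x` of the
direction `u`. Apart from one exceptional direction, two circles are tangent exactly when, for
suitable orientations, their polynomials `f ≠ g` differ by a multiple of a square `(x - t)²`, that
is, when the curves `x ↦ (x, f x, f' x)` and `x ↦ (x, g x, g' x)` in `1`-jet space meet over `t`.

By a dimension count, some nonzero polynomial `P` of weighted degree `O(√n)` vanishes on all these
curves. Where two of them meet, the derivatives of `P` along the vector fields `∂₂` and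
`D = ∂₀ + X₂ ∂₁` both vanish. If every curve had at least `deg P` meeting points, then `∂₂ P` and
`D P` would vanish on all the curves as well, hence be zero by induction on the degree; since
`[∂₂, D] = ∂₁`, this makes `P` constant, a contradiction. So in every subfamily some circle has
`O(√n)` tangency points, and deleting such circles one at a time bounds the number of tangent pairs.
-/

section Spheres

open EuclideanGeometry Metric

variable {E : Type*} [NormedAddCommGroup E] [InnerProductSpace ℝ E]

lemma sphere_inter_sphere_eq_singleton_of_mem_line {c c' p : E} {r r' : ℝ} (hp : p ∈ sphere c r)
    (hp' : p ∈ sphere c' r') (hline : p ∈ line[ℝ, c, c']) : sphere c r ∩ sphere c' r' = {p} := by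
  refine Set.eq_singleton_iff_unique_mem.mpr ⟨⟨hp, hp'⟩, fun x ⟨hx, hx'⟩ => ?_⟩
  have hle : line[ℝ, c, c'] ≤ AffineSubspace.perpBisector x p :=
    affineSpan_pair_le_of_mem_of_mem
      (AffineSubspace.mem_perpBisector_iff_dist_eq'.mpr (hx.trans hp.symm))
      (AffineSubspace.mem_perpBisector_iff_dist_eq'.mpr (hx'.trans hp'.symm))
  exact AffineSubspace.right_mem_perpBisector.mp (hle hline)

lemma mem_line_of_sphere_inter_sphere_eq_singleton {c c' p : E} {r r' : ℝ}
    (h : sphere c r ∩ sphere c' r' = {p}) : p ∈ line[ℝ, c, c'] := by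
  obtain ⟨hp, hp'⟩ : p ∈ sphere c r ∩ sphere c' r' := h ▸ Set.mem_singleton p
  have hdist {x : E} (hx : x ∈ line[ℝ, c, c']) :
      dist (reflection line[ℝ, c, c'] p) x = dist p x := by
    rw [dist_comm, dist_reflection_eq_of_mem _ hx, dist_comm]
  have hmem : reflection line[ℝ, c, c'] p ∈ sphere c r ∩ sphere c' r' :=
    ⟨(hdist (left_mem_affineSpan_pair ℝ c c')).trans hp,
      (hdist (right_mem_affineSpan_pair ℝ c c')).trans hp'⟩
  rw [h, Set.mem_singleton_iff] at hmem
  exact (reflection_eq_self_iff p).mp hmem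

lemma ne_of_sphere_inter_sphere_eq_singleton {c c' p : E} {r r' : ℝ} (hr : 0 < r)
    (h : sphere c r ∩ sphere c' r' = {p}) : c ≠ c' := by
  rintro rfl
  have hp : p ∈ sphere c r := (h ▸ Set.mem_singleton p : p ∈ sphere c r ∩ sphere c r').1
  have hpc := mem_line_of_sphere_inter_sphere_eq_singleton h
  rw [Set.pair_eq_singleton, AffineSubspace.mem_affineSpan_singleton] at hpc
  exact ne_of_mem_sphere hp hr.ne' hpc

lemma center_mem_line_of_sphere_inter_sphere_eq_singleton {c c' p : E} {r r' : ℝ} (hr : 0 < r)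
    (h : sphere c r ∩ sphere c' r' = {p}) : c' ∈ line[ℝ, p, c] := by
  have hp : p ∈ sphere c r := (h ▸ Set.mem_singleton p : p ∈ sphere c r ∩ sphere c' r').1
  have hcol : Collinear ℝ {p, c, c'} :=
    collinear_insert_of_mem_affineSpan_pair (mem_line_of_sphere_inter_sphere_eq_singleton h)
  exact hcol.mem_affineSpan_of_mem_of_ne (by simp) (by simp) (by simp) (ne_of_mem_sphere hp hr.ne')

lemma sphere_inter_sphere_eq_singleton_trans {c c₁ c₂ p : E} {r r₁ r₂ : ℝ} (hr : 0 < r)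
    (h₁ : sphere c r ∩ sphere c₁ r₁ = {p}) (h₂ : sphere c r ∩ sphere c₂ r₂ = {p})
    (hne : sphere c₁ r₁ ≠ sphere c₂ r₂) : sphere c₁ r₁ ∩ sphere c₂ r₂ = {p} := by
  have hp₁ : p ∈ sphere c₁ r₁ := (h₁ ▸ Set.mem_singleton p : p ∈ sphere c r ∩ sphere c₁ r₁).2
  have hp₂ : p ∈ sphere c₂ r₂ := (h₂ ▸ Set.mem_singleton p : p ∈ sphere c r ∩ sphere c₂ r₂).2
  have hc : c₁ ≠ c₂ := by
    rintro rfl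
    exact hne (by rw [← mem_sphere.mp hp₁, ← mem_sphere.mp hp₂])
  have hcol : Collinear ℝ {c₁, c₂, p, c} := collinear_insert_insert_of_mem_affineSpan_pair
    (center_mem_line_of_sphere_inter_sphere_eq_singleton hr h₁)
    (center_mem_line_of_sphere_inter_sphere_eq_singleton hr h₂)
  exact sphere_inter_sphere_eq_singleton_of_mem_line hp₁ hp₂
    (hcol.mem_affineSpan_of_mem_of_ne (by simp) (by simp) (by simp) hc)

end Spheres

section Degeneracy

lemma encard_pairs_le_of_degenerate {α : Type*} {r : α → α → Prop} (hr : ∀ a b, r a b → r b a)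
    {B : ℕ} (s : Finset α)
    (h : ∀ t ⊆ s, t.Nonempty → ∃ a ∈ t, ∀ u ⊆ t, (∀ b ∈ u, r a b) → u.card ≤ B) :
    {e : Set α | ∃ a ∈ s, ∃ b ∈ s, r a b ∧ e = {a, b}}.encard ≤ (s.card * B : ℕ) := by
  classical
  induction s using Finset.strongInduction with | H s ih => ?_
  rcases s.eq_empty_or_nonempty with rfl | hne
  · simp
  obtain ⟨a, ha, hB⟩ := h s subset_rfl hne
  let u := s.filter (r a)
  have hsub : {e : Set α | ∃ b ∈ s, ∃ c ∈ s, r b c ∧ e = {b, c}} ⊆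
      {e | ∃ b ∈ s.erase a, ∃ c ∈ s.erase a, r b c ∧ e = {b, c}} ∪
        ((u.image fun b => {a, b} : Finset (Set α)) : Set (Set α)) := by
    rintro _ ⟨b, hb, c, hc, hbc, rfl⟩
    rw [Set.mem_union, Finset.mem_coe, Finset.mem_image]
    by_cases hba : b = a
    · exact .inr ⟨c, Finset.mem_filter.mpr ⟨hc, hba ▸ hbc⟩, by rw [hba]⟩
    by_cases hca : c = a
    · exact .inr ⟨b, Finset.mem_filter.mpr ⟨hb, hr _ _ (hca ▸ hbc)⟩, by rw [hca, Set.pair_comm]⟩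
    exact .inl ⟨b, Finset.mem_erase.mpr ⟨hba, hb⟩, c, Finset.mem_erase.mpr ⟨hca, hc⟩, hbc, rfl⟩
  have herase := ih (s.erase a) (Finset.erase_ssubset ha)
    fun t ht => h t (ht.trans (Finset.erase_subset a s))
  have hu : (u.image fun b => ({a, b} : Set α)).card ≤ B :=
    Finset.card_image_le.trans
      (hB u (Finset.filter_subset _ _) fun b hb => (Finset.mem_filter.mp hb).2)
  calc _ ≤ _ := Set.encard_le_encard hsub
    _ ≤ _ := Set.encard_union_le _ _
    _ ≤ ((s.erase a).card * B : ℕ) + (B : ℕ∞) := by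
        rw [Set.encard_coe_eq_coe_finsetCard]
        gcongr
    _ = (s.card * B : ℕ) := by
        rw [← Finset.card_erase_add_one ha, add_one_mul, Nat.cast_add]

end Degeneracy

section WeightedDegree

open MvPolynomial

variable {σ K : Type*}

/-- The polynomials all of whose monomials have `w`-weight less than `E`. -/
def weightLT (K : Type*) [CommSemiring K] (w : σ → ℕ) (E : ℕ) : Submodule K (MvPolynomial σ K) :=
  restrictSupport K {m | Finsupp.weight w m < E}

lemma mem_weightLT_iff [CommSemiring K] {w : σ → ℕ} {E : ℕ} {P : MvPolynomial σ K} :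
    P ∈ weightLT K w E ↔ ∀ m ∈ P.support, Finsupp.weight w m < E :=
  mem_restrictSupport_iff K

lemma pderiv_mem_weightLT [CommSemiring K] {w : σ → ℕ} {E E' : ℕ} {i : σ} {P : MvPolynomial σ K}
    (hP : P ∈ weightLT K w E) (hE : E ≤ E' + w i) : pderiv i P ∈ weightLT K w E' := by
  rw [mem_weightLT_iff] at hP ⊢
  intro m hm
  rw [mem_support_iff, coeff_pderiv] at hm
  have hlt := hP _ (mem_support_iff.mpr (left_ne_zero_of_mul hm))
  rw [map_add, Finsupp.weight_single, one_smul] at hlt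
  omega

lemma X_mul_pderiv_mem_weightLT [CommSemiring K] {w : σ → ℕ} {E E' : ℕ} {i j : σ}
    {P : MvPolynomial σ K} (hP : P ∈ weightLT K w E) (hE : E + w j ≤ E' + w i) :
    X j * pderiv i P ∈ weightLT K w E' := by
  rw [mem_weightLT_iff] at hP ⊢
  intro m hm
  rw [support_X_mul, Finset.mem_map] at hm
  obtain ⟨m, hm, rfl⟩ := hm
  rw [mem_support_iff, coeff_pderiv] at hm
  have hlt := hP _ (mem_support_iff.mpr (left_ne_zero_of_mul hm))
  rw [map_add, Finsupp.weight_single, one_smul] at hlt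
  rw [addLeftEmbedding_apply, map_add, Finsupp.weight_single, one_smul]
  omega

lemma aeval_mem_degreeLT [CommSemiring K] {w : σ → ℕ} {E : ℕ} {v : σ → Polynomial K}
    (hv : ∀ i, (v i).natDegree ≤ w i) {P : MvPolynomial σ K} (hP : P ∈ weightLT K w E) :
    aeval v P ∈ Polynomial.degreeLT K E := by
  rw [P.as_sum, map_sum]
  refine Submodule.sum_mem _ fun m hm => ?_
  rw [aeval_monomial, Polynomial.algebraMap_eq, Polynomial.mem_degreeLT]
  have hdeg : (Polynomial.C (coeff m P) * m.prod fun i k => v i ^ k).natDegree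
      ≤ Finsupp.weight w m :=
    calc _ ≤ (∏ i ∈ m.support, v i ^ m i).natDegree := Polynomial.natDegree_C_mul_le _ _
      _ ≤ ∑ i ∈ m.support, (v i ^ m i).natDegree := Polynomial.natDegree_prod_le _ _
      _ ≤ ∑ i ∈ m.support, m i * w i :=
        Finset.sum_le_sum fun i _ => Polynomial.natDegree_pow_le_of_le (m i) (hv i)
      _ = Finsupp.weight w m := by rw [Finsupp.weight_apply]; rfl
  refine (Polynomial.degree_le_of_natDegree_le hdeg).trans_lt ?_
  exact_mod_cast mem_weightLT_iff.mp hP m hm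

lemma exists_ne_zero_forall_aeval_eq_zero [Field K] {w : σ → ℕ} {E : ℕ}
    {S : Finset (σ → Polynomial K)} (hdeg : ∀ v ∈ S, ∀ i, (v i).natDegree ≤ w i)
    {A : Finset (σ →₀ ℕ)} (hA : ∀ m ∈ A, Finsupp.weight w m < E) (hcard : S.card * E < A.card) :
    ∃ P ∈ weightLT K w E, P ≠ 0 ∧ ∀ v ∈ S, aeval v P = 0 := by
  have hle : restrictSupport K (A : Set (σ →₀ ℕ)) ≤ weightLT K w E := restrictSupport_mono K hA
  let V := restrictSupport K (A : Set (σ →₀ ℕ))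
  have hV : Module.finrank K V = A.card := by
    rw [Module.finrank_eq_nat_card_basis (basisRestrictSupport K (A : Set (σ →₀ ℕ)))]
    simp
  let ev : V →ₗ[K] (S → Polynomial.degreeLT K E) := LinearMap.pi fun v =>
    (aeval v.1).toLinearMap.restrict fun _ hP => aeval_mem_degreeLT (hdeg v.1 v.2) (hle hP)
  have : Module.Finite K V := Module.Finite.of_basis (basisRestrictSupport K _)
  have : Module.Finite K (Polynomial.degreeLT K E) :=
    Module.Finite.of_basis (Polynomial.degreeLT.basis K E)
  have hdim : Module.finrank K (S → Polynomial.degreeLT K E) < Module.finrank K V := by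
    rw [hV, Module.finrank_pi_fintype]
    simpa [Module.finrank_eq_card_basis (Polynomial.degreeLT.basis K E)] using hcard
  obtain ⟨P, hP, hP0⟩ :=
    (Submodule.ne_bot_iff _).mp (LinearMap.ker_ne_bot_of_finrank_lt (f := ev) hdim)
  refine ⟨P, hle P.2, Subtype.coe_ne_coe.mpr hP0, fun v hv => ?_⟩
  exact congrArg Subtype.val (congrFun (LinearMap.mem_ker.mp hP) ⟨v, hv⟩)

lemma eq_C_of_forall_pderiv_eq_zero [CommSemiring K] [NoZeroDivisors K] [CharZero K]
    {P : MvPolynomial σ K} (h : ∀ i, pderiv i P = 0) : P = C (coeff 0 P) := by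
  classical
  ext m
  rw [coeff_C]
  split_ifs with hm
  · rw [hm]
  obtain ⟨i, hi⟩ := Finsupp.ne_iff.mp (Ne.symm hm)
  have hc := congrArg (coeff (m - Finsupp.single i 1)) (h i)
  rw [coeff_pderiv, coeff_zero, tsub_add_cancel_of_le
    (Finsupp.single_le_iff.mpr (Nat.one_le_iff_ne_zero.mpr hi))] at hc
  exact (mul_eq_zero.mp hc).resolve_right (Nat.cast_add_one_ne_zero _)

end WeightedDegree

section JetCurves

open MvPolynomial (aeval pderiv)
open Polynomial (derivative)
open scoped Polynomial

variable {K : Type*}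

/-- The curve `x ↦ (x, f x, f' x)` of `1`-jets of `f`, as a triple of polynomials. -/
def jetCurve [CommSemiring K] (f : K[X]) : Fin 3 → K[X] :=
  ![Polynomial.X, f, derivative f]

/-- The vector field `∂₀ + X₂ ∂₁` on the space of `1`-jets: differentiation along a jet curve, up to
the term in `∂₂` coming from the second derivative. -/
def totalDerivative (K : Type*) [CommSemiring K] :
    Derivation K (MvPolynomial (Fin 3) K) (MvPolynomial (Fin 3) K) :=
  pderiv 0 + (MvPolynomial.X 2 : MvPolynomial (Fin 3) K) • pderiv 1

lemma derivative_aeval_jetCurve [CommSemiring K] (f : K[X]) (P : MvPolynomial (Fin 3) K) :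
    derivative (aeval (jetCurve f) P) = aeval (jetCurve f) (totalDerivative K P) +
      derivative (derivative f) * aeval (jetCurve f) (pderiv 2 P) := by
  induction P using MvPolynomial.induction_on with
  | C a => simp
  | add p q hp hq => simp only [map_add, hp, hq]; ring
  | mul_X p i hp =>
    have hX : derivative (jetCurve f i) =
        aeval (jetCurve f) (totalDerivative K (MvPolynomial.X i)) +
          derivative (derivative f) *
            aeval (jetCurve f) (pderiv (R := K) 2 (MvPolynomial.X i)) := by
      fin_cases i <;> simp [jetCurve, totalDerivative]
    simp only [map_mul, Polynomial.derivative_mul, Derivation.leibniz, smul_eq_mul, map_add,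
      MvPolynomial.aeval_X, hp, hX]
    ring

-- The plane field spanned by `∂₂` and `totalDerivative` is a contact structure: it is not
-- integrable, so only constants are annihilated by both vector fields.
lemma lie_pderiv_two_totalDerivative [CommRing K] :
    ⁅pderiv (R := K) (2 : Fin 3), totalDerivative K⁆ = pderiv 1 := by
  refine MvPolynomial.derivation_ext fun i => ?_
  fin_cases i <;> simp [totalDerivative, Derivation.commutator_apply]

lemma eq_C_of_totalDerivative_eq_zero [CommRing K] [NoZeroDivisors K] [CharZero K]
    {P : MvPolynomial (Fin 3) K} (hD : totalDerivative K P = 0) (h2 : pderiv 2 P = 0) :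
    P = MvPolynomial.C (MvPolynomial.coeff 0 P) := by
  have h1 : pderiv 1 P = 0 := by
    rw [← lie_pderiv_two_totalDerivative, Derivation.commutator_apply, hD, h2, map_zero, map_zero,
      sub_zero]
  have h0 : pderiv 0 P = 0 := by simpa [totalDerivative, h1] using hD
  exact eq_C_of_forall_pderiv_eq_zero
    (Fin.forall_fin_succ.mpr ⟨h0, Fin.forall_fin_two.mpr ⟨h1, h2⟩⟩)

lemma totalDerivative_mem_weightLT [CommSemiring K] {d E : ℕ} (hd : 1 ≤ d)
    {P : MvPolynomial (Fin 3) K} (hP : P ∈ weightLT K ![1, d, d - 1] (E + 1)) :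
    totalDerivative K P ∈ weightLT K ![1, d, d - 1] E := by
  refine Submodule.add_mem _ (pderiv_mem_weightLT hP ?_) (X_mul_pderiv_mem_weightLT hP ?_)
  · simp
  · simp only [Matrix.cons_val]
    omega

lemma natDegree_jetCurve_le [CommSemiring K] {d : ℕ} {f : K[X]} (hf : f.natDegree ≤ d)
    (i : Fin 3) : (jetCurve f i).natDegree ≤ (![1, d, d - 1] : Fin 3 → ℕ) i := by
  fin_cases i
  · exact Polynomial.natDegree_X_le
  · exact hf
  · exact (Polynomial.natDegree_derivative_le f).trans (Nat.sub_le_sub_right hf 1)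

lemma eval_aeval_jetCurve [CommSemiring K] (f : K[X]) (P : MvPolynomial (Fin 3) K) (t : K) :
    (aeval (jetCurve f) P).eval t =
      MvPolynomial.eval ![t, f.eval t, (derivative f).eval t] P := by
  rw [← Polynomial.coe_aeval_eq_eval, ← MvPolynomial.aeval_eq_eval, MvPolynomial.comp_aeval_apply]
  congr 2
  ext i
  fin_cases i <;> simp [jetCurve]

lemma eval_eq_of_rootMultiplicity_sub_eq_two [CommRing K] [NoZeroDivisors K] [CharZero K]
    {f g : K[X]} {t : K} (h : (f - g).rootMultiplicity t = 2) :
    f.eval t = g.eval t ∧ (derivative f).eval t = (derivative g).eval t ∧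
      (derivative (derivative f)).eval t ≠ (derivative (derivative g)).eval t := by
  have hne : f - g ≠ 0 := by
    intro h0
    simp [h0] at h
  obtain ⟨h0, h1⟩ := (Polynomial.one_lt_rootMultiplicity_iff_isRoot (t := t) hne).mp (by omega)
  have h2 : ¬ (derivative (derivative (f - g))).IsRoot t := by
    intro h2
    refine absurd (Polynomial.lt_rootMultiplicity_of_isRoot_iterate_derivative (n := 2) hne ?_)
      h.not_gt
    intro m hm
    interval_cases m
    exacts [h0, h1, h2]
  simp only [Polynomial.IsRoot.def, map_sub, Polynomial.eval_sub, sub_eq_zero] at h0 h1 h2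
  exact ⟨h0, h1, h2⟩

-- The two jet curves pass through a common point, there with the distinct tangent vectors
-- `D + f'' ∂₂` and `D + g'' ∂₂`, whose span contains `D` and `∂₂`.
lemma eval_aeval_eq_zero_of_rootMultiplicity_sub_eq_two [CommRing K] [NoZeroDivisors K]
    [CharZero K] {f g : K[X]} {t : K} (h : (f - g).rootMultiplicity t = 2)
    {P : MvPolynomial (Fin 3) K} (hf : aeval (jetCurve f) P = 0) (hg : aeval (jetCurve g) P = 0) :
    (aeval (jetCurve f) (totalDerivative K P)).eval t = 0 ∧
      (aeval (jetCurve f) (pderiv 2 P)).eval t = 0 := by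
  obtain ⟨h0, h1, h2⟩ := eval_eq_of_rootMultiplicity_sub_eq_two h
  have hDf := congrArg (Polynomial.eval t) (derivative_aeval_jetCurve f P)
  have hDg := congrArg (Polynomial.eval t) (derivative_aeval_jetCurve g P)
  simp only [hf, hg, Polynomial.derivative_zero, Polynomial.eval_zero, Polynomial.eval_add,
    Polynomial.eval_mul, eval_aeval_jetCurve, ← h0, ← h1] at hDf hDg ⊢
  have hpderiv : MvPolynomial.eval ![t, f.eval t, (derivative f).eval t] (pderiv 2 P) = 0 :=
    (mul_eq_zero.mp (by linear_combination hDg - hDf)).resolve_left (sub_ne_zero.mpr h2)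
  exact ⟨by simpa [hpderiv] using hDf.symm, hpderiv⟩

lemma eq_zero_of_forall_aeval_jetCurve_eq_zero [CommRing K] [IsDomain K] [CharZero K] {d E : ℕ}
    (hd : 2 ≤ d) {S : Finset K[X]} (hS : S.Nonempty) (hdeg : ∀ f ∈ S, f.natDegree ≤ d)
    (hcontact : ∀ f ∈ S, ∃ T : Finset K, E ≤ T.card ∧
      ∀ t ∈ T, ∃ g ∈ S, (f - g).rootMultiplicity t = 2)
    {P : MvPolynomial (Fin 3) K} (hP : P ∈ weightLT K ![1, d, d - 1] E)
    (hvanish : ∀ f ∈ S, aeval (jetCurve f) P = 0) : P = 0 := by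
  induction E generalizing P with
  | zero =>
    rw [mem_weightLT_iff] at hP
    exact MvPolynomial.support_eq_empty.mp
      (Finset.eq_empty_of_forall_notMem fun m hm => Nat.not_lt_zero _ (hP m hm))
  | succ E ih =>
    have eq_zero_of_contact {Q : MvPolynomial (Fin 3) K} (hQ : Q ∈ weightLT K ![1, d, d - 1] E)
        (hQt : ∀ f ∈ S, ∀ g ∈ S, ∀ t, (f - g).rootMultiplicity t = 2 →
          (aeval (jetCurve f) Q).eval t = 0) : Q = 0 := by
      refine ih (fun f hf => ?_) hQ fun f hf => ?_ <;> obtain ⟨T, hT, hTS⟩ := hcontact f hf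
      · exact ⟨T, by omega, hTS⟩
      have hlt := Polynomial.mem_degreeLT.mp
        (aeval_mem_degreeLT (natDegree_jetCurve_le (hdeg f hf)) hQ)
      refine Polynomial.eq_zero_of_degree_lt_of_eval_finset_eq_zero T
        (hlt.trans_le (by exact_mod_cast (by omega : E ≤ T.card))) fun t ht => ?_
      obtain ⟨g, hg, hfg⟩ := hTS t ht
      exact hQt f hf g hg t hfg
    have hvan {f g : K[X]} (hf : f ∈ S) (hg : g ∈ S) {t : K}
        (hfg : (f - g).rootMultiplicity t = 2) :=
      eval_aeval_eq_zero_of_rootMultiplicity_sub_eq_two hfg (hvanish f hf) (hvanish g hg)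
    have hD : totalDerivative K P = 0 :=
      eq_zero_of_contact (totalDerivative_mem_weightLT (by omega) hP)
        fun f hf g hg t hfg => (hvan hf hg hfg).1
    have h2 : pderiv 2 P = 0 :=
      eq_zero_of_contact (pderiv_mem_weightLT hP (by simp only [Matrix.cons_val]; omega))
        fun f hf g hg t hfg => (hvan hf hg hfg).2
    obtain ⟨f, hf⟩ := hS
    have hconst := eq_C_of_totalDerivative_eq_zero hD h2
    have hzero := hvanish f hf
    rw [hconst, MvPolynomial.aeval_C, Polynomial.algebraMap_eq, Polynomial.C_eq_zero] at hzero
    rw [hconst, hzero, map_zero]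

lemma exists_ne_zero_forall_aeval_jetCurve_eq_zero [Field K] {d k : ℕ} (hd : 1 ≤ d)
    {S : Finset K[X]} (hdeg : ∀ f ∈ S, f.natDegree ≤ d) (hk : 2 * d * S.card < k ^ 2) :
    ∃ P ∈ weightLT K ![1, d, d - 1] (2 * d * k), P ≠ 0 ∧ ∀ f ∈ S, aeval (jetCurve f) P = 0 := by
  classical
  have hk0 : 0 < k := Nat.pos_of_ne_zero (by rintro rfl; simp at hk)
  let A : Finset (Fin 3 →₀ ℕ) := Finset.univ.finsupp fun _ => Finset.range k
  have hAcard : A.card = k ^ 3 := by simp [A, Finset.card_finsupp]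
  have hA : ∀ m ∈ A, Finsupp.weight ![1, d, d - 1] m < 2 * d * k := by
    intro m hm
    have hm (i : Fin 3) : m i < k :=
      Finset.mem_range.mp ((Finset.mem_finsupp_iff.mp hm).2 i (Finset.mem_univ i))
    calc Finsupp.weight ![1, d, d - 1] m = ∑ i, m i * (![1, d, d - 1] : Fin 3 → ℕ) i := by
          rw [Finsupp.weight_apply, Finsupp.sum_fintype _ _ (by simp)]; rfl
      _ < ∑ i, k * (![1, d, d - 1] : Fin 3 → ℕ) i :=
          Finset.sum_lt_sum (fun i _ => Nat.mul_le_mul_right _ (hm i).le)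
            ⟨0, Finset.mem_univ 0, by simpa using hm 0⟩
      _ = k * (1 + d + (d - 1)) := by
          rw [← Finset.mul_sum, Fin.sum_univ_three]; rfl
      _ = 2 * d * k := by rw [show 1 + d + (d - 1) = 2 * d by omega, mul_comm]
  obtain ⟨P, hP, hP0, hPS⟩ := exists_ne_zero_forall_aeval_eq_zero (S := S.image jetCurve)
    (by simpa using fun f hf => natDegree_jetCurve_le (hdeg f hf)) hA (by
      calc (S.image jetCurve).card * (2 * d * k) ≤ S.card * (2 * d * k) := by
            gcongr; exact Finset.card_image_le
        _ = 2 * d * S.card * k := by ring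
        _ < k ^ 2 * k := by gcongr
        _ = A.card := by rw [hAcard]; ring)
  exact ⟨P, hP, hP0, fun f hf => hPS _ (Finset.mem_image_of_mem _ hf)⟩

theorem exists_forall_card_contact_le [Field K] [CharZero K] {d k : ℕ} (hd : 2 ≤ d)
    {S : Finset K[X]} (hS : S.Nonempty) (hdeg : ∀ f ∈ S, f.natDegree ≤ d)
    (hk : 2 * d * S.card < k ^ 2) :
    ∃ f ∈ S, ∀ T : Finset K, (∀ t ∈ T, ∃ g ∈ S, (f - g).rootMultiplicity t = 2) →
      T.card ≤ 2 * d * k := by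
  by_contra! hcontact
  obtain ⟨P, hP, hP0, hvanish⟩ :=
    exists_ne_zero_forall_aeval_jetCurve_eq_zero (by omega) hdeg hk
  refine hP0 (eq_zero_of_forall_aeval_jetCurve_eq_zero hd hS hdeg (fun f hf => ?_) hP hvanish)
  obtain ⟨T, hTS, hT⟩ := hcontact f hf
  exact ⟨T, hT.le, hTS⟩

end JetCurves

section Circles

open Metric Polynomial

/-- `(1 + x²) (⟪c, u x⟫ - ρ)` for the unit vector `u x = unitVec x`: the support function of the
circle with center `c` and signed radius `ρ`, cleared of denominators. The two signs of `ρ`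
correspond to the two orientations of the circle. -/
def supportPoly (c : Pt2) (ρ : ℝ) : ℝ[X] :=
  C (c 0) * (1 - X ^ 2) + C (2 * c 1) * X - C ρ * (1 + X ^ 2)

/-- The rational parametrization of the unit circle, which misses only the point `(-1, 0)`. -/
def unitVec (t : ℝ) : Pt2 :=
  !₂[(1 - t ^ 2) / (1 + t ^ 2), 2 * t / (1 + t ^ 2)]

lemma natDegree_supportPoly_le (c : Pt2) (ρ : ℝ) : (supportPoly c ρ).natDegree ≤ 2 := by
  unfold supportPoly
  compute_degree

lemma exists_eq_unitVec {e : Pt2} (he : ‖e‖ = 1) (hne : e ≠ !₂[-1, 0]) : ∃ t, e = unitVec t := by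
  have hsq : e 0 ^ 2 + e 1 ^ 2 = 1 := by
    simpa only [Fin.sum_univ_two, he, one_pow] using (EuclideanSpace.real_norm_sq_eq e).symm
  have h0 : 1 + e 0 ≠ 0 := by
    intro h0
    have he0 : e 0 = -1 := by linarith
    have he1 : e 1 = 0 := by simpa [he0] using hsq
    exact hne (by ext i; fin_cases i <;> simp [he0, he1])
  have hden : 1 + (e 1 / (1 + e 0)) ^ 2 = 2 / (1 + e 0) := by
    field_simp
    linear_combination hsq
  refine ⟨e 1 / (1 + e 0), ?_⟩
  ext i
  fin_cases i
  · simp only [Fin.zero_eta, unitVec, hden, Matrix.cons_val_zero]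
    field_simp
    linear_combination hsq
  · simp only [Fin.mk_one, unitVec, hden, Matrix.cons_val_one, Matrix.cons_val_fin_one]
    field_simp

lemma supportPoly_sub_supportPoly (p : Pt2) (t ρ ρ' : ℝ) :
    supportPoly (p + ρ • unitVec t) ρ - supportPoly (p + ρ' • unitVec t) ρ' =
      C (2 * (ρ' - ρ) / (1 + t ^ 2)) * (X - C t) ^ 2 := by
  have ht : 1 + t ^ 2 ≠ 0 := by positivity
  refine Polynomial.funext fun x => ?_
  simp only [supportPoly, unitVec, PiLp.add_apply, PiLp.smul_apply, Matrix.cons_val_zero,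
    Matrix.cons_val_one, Matrix.cons_val_fin_one, smul_eq_mul, map_add, map_mul, eval_sub, eval_add,
    eval_mul, eval_C, eval_one, eval_pow, eval_X]
  field_simp
  ring

lemma rootMultiplicity_supportPoly_sub (p : Pt2) (t : ℝ) {ρ ρ' : ℝ} (h : ρ ≠ ρ') :
    (supportPoly (p + ρ • unitVec t) ρ -
      supportPoly (p + ρ' • unitVec t) ρ').rootMultiplicity t = 2 := by
  have ha : 2 * (ρ' - ρ) / (1 + t ^ 2) ≠ 0 :=
    div_ne_zero (mul_ne_zero two_ne_zero (sub_ne_zero.mpr h.symm)) (by positivity)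
  rw [supportPoly_sub_supportPoly, rootMultiplicity_mul (by simp [ha, X_sub_C_ne_zero]),
    rootMultiplicity_C, rootMultiplicity_X_sub_C_pow, zero_add]

lemma exists_rootMultiplicity_supportPoly_sub_eq_two {c c' p : Pt2} {r r' ρ : ℝ} (hr : 0 < r)
    (h : sphere c r ∩ sphere c' r' = {p}) (hρ : |ρ| = r) (hp : p ≠ c - ρ • !₂[-1, 0]) :
    ∃ t ρ', |ρ'| = r' ∧ p = c - ρ • unitVec t ∧
      (supportPoly c ρ - supportPoly c' ρ').rootMultiplicity t = 2 := by
  obtain ⟨hpc, hpc'⟩ : p ∈ sphere c r ∩ sphere c' r' := h ▸ Set.mem_singleton p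
  have hρ0 : ρ ≠ 0 := abs_pos.mp (hρ ▸ hr)
  obtain ⟨e, rfl⟩ : ∃ e, c = p + ρ • e := ⟨ρ⁻¹ • (c - p), by simp [hρ0]⟩
  have he : ‖e‖ = 1 := by
    rw [mem_sphere, dist_self_add_right, norm_smul, Real.norm_eq_abs, hρ] at hpc
    exact (mul_eq_left₀ hr.ne').mp hpc
  obtain ⟨t, rfl⟩ := exists_eq_unitVec he (by rintro rfl; simp at hp)
  obtain ⟨a, rfl⟩ := mem_affineSpan_pair_iff_exists_lineMap_eq.mp
    (center_mem_line_of_sphere_inter_sphere_eq_singleton hr h)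
  have hline : AffineMap.lineMap p (p + ρ • unitVec t) a = p + (a * ρ) • unitVec t := by
    rw [AffineMap.lineMap_apply_module', add_sub_cancel_left, smul_smul, add_comm]
  rw [hline] at h hpc' ⊢
  have hne : ρ ≠ a * ρ := by
    intro h'
    exact ne_of_sphere_inter_sphere_eq_singleton hr h (by rw [← h'])
  refine ⟨t, a * ρ, ?_, by simp, rootMultiplicity_supportPoly_sub p t hne⟩
  rwa [mem_sphere, dist_self_add_right, norm_smul, he, mul_one] at hpc'

lemma card_tangencyPoints_le {c : Pt2} {r ρ : ℝ} (hr : 0 < r) (hρ : |ρ| = r) {S : Finset ℝ[X]}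
    {B : ℕ} (hB : ∀ T : Finset ℝ,
      (∀ t ∈ T, ∃ g ∈ S, (supportPoly c ρ - g).rootMultiplicity t = 2) → T.card ≤ B)
    {A : Finset Pt2} (hA : ∀ p ∈ A, ∃ c' r', sphere c r ∩ sphere c' r' = {p} ∧
      ∀ ρ', |ρ'| = r' → supportPoly c' ρ' ∈ S) : A.card ≤ B + 1 := by
  classical
  have hsub : (A.erase (c - ρ • !₂[-1, 0]) : Set Pt2) ⊆ (fun t => c - ρ • unitVec t) ''
      {t | ∃ g ∈ S, (supportPoly c ρ - g).rootMultiplicity t = 2} := by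
    intro p hp
    obtain ⟨hpne, hpA⟩ := Finset.mem_erase.mp hp
    obtain ⟨c', r', hcc', hS⟩ := hA p hpA
    obtain ⟨t, ρ', hρ', rfl, ht⟩ := exists_rootMultiplicity_supportPoly_sub_eq_two hr hcc' hρ hpne
    exact ⟨t, ⟨_, hS ρ' hρ', ht⟩, rfl⟩
  obtain ⟨T, hT, hTA⟩ := Finset.subset_set_image_iff.mp hsub
  have herase : (A.erase (c - ρ • !₂[-1, 0])).card ≤ B :=
    hTA ▸ Finset.card_image_le.trans (hB T hT)
  exact Nat.le_add_of_sub_le (Finset.pred_card_le_card_erase.trans herase)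

lemma exists_forall_card_tangent_le {C : Finset (Set Pt2)} (hne : C.Nonempty)
    (hC : ∀ s ∈ C, IsCircle2 s)
    (hinj : ∀ c ∈ C, ∀ d ∈ C, ∀ d' ∈ C, ∀ p, c ∩ d = {p} → c ∩ d' = {p} → d = d') {k : ℕ}
    (hk : 8 * C.card < k ^ 2) :
    ∃ c ∈ C, ∀ N ⊆ C, (∀ d ∈ N, Tangent2 c d) → N.card ≤ 4 * k + 1 := by
  classical
  choose! cen rad hrad hsphere using hC
  let S : Finset ℝ[X] := C.biUnion fun s =>
    {supportPoly (cen s) (rad s), supportPoly (cen s) (-rad s)}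
  have hmem {f : ℝ[X]} : f ∈ S ↔ ∃ s ∈ C, ∃ ρ, |ρ| = rad s ∧ f = supportPoly (cen s) ρ := by
    simp only [S, Finset.mem_biUnion, Finset.mem_insert, Finset.mem_singleton]
    refine exists_congr fun s => and_congr_right fun hs => ?_
    simp only [abs_eq (hrad s hs).le, or_and_right, exists_or, exists_eq_left]
  have hScard : S.card ≤ C.card * 2 := Finset.card_biUnion_le_card_mul _ _ _ fun _ _ =>
    Finset.card_le_two
  obtain ⟨s₀, hs₀⟩ := hne
  obtain ⟨f, hf, hcontact⟩ := exists_forall_card_contact_le (S := S) (k := k) le_rfl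
    ⟨_, hmem.mpr ⟨s₀, hs₀, rad s₀, abs_of_pos (hrad s₀ hs₀), rfl⟩⟩
    (by rintro f hf; obtain ⟨s, -, ρ, -, rfl⟩ := hmem.mp hf; exact natDegree_supportPoly_le _ _)
    (by omega)
  obtain ⟨c, hc, ρ, hρ, rfl⟩ := hmem.mp hf
  refine ⟨c, hc, fun N hN htan => ?_⟩
  choose! p hp using htan
  have hpinj : Set.InjOn p N := fun d hd d' hd' hdd' =>
    hinj c hc d (hN hd) d' (hN hd') (p d) (hp d hd) (hdd' ▸ hp d' hd')
  rw [← Finset.card_image_of_injOn hpinj]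
  refine card_tangencyPoints_le (hrad c hc) hρ hcontact (Finset.forall_mem_image.mpr fun d hd => ?_)
  refine ⟨cen d, rad d, ?_, fun ρ' hρ' => hmem.mpr ⟨d, hN hd, ρ', hρ', rfl⟩⟩
  rw [← hsphere c hc, ← hsphere d (hN hd), hp d hd]

lemma Tangent2.symm {a b : Set Pt2} (h : Tangent2 a b) : Tangent2 b a := by
  rwa [Tangent2, Set.inter_comm]

lemma IsCircle2.ne_of_inter_eq_singleton {a b : Set Pt2} {p : Pt2} (ha : IsCircle2 a)
    (h : a ∩ b = {p}) : a ≠ b := by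
  obtain ⟨c, r, hr, rfl⟩ := ha
  rintro rfl
  exact ne_of_sphere_inter_sphere_eq_singleton hr h rfl

lemma IsCircle2.inter_eq_singleton_trans {a b b' : Set Pt2} {p : Pt2} (ha : IsCircle2 a)
    (hb : IsCircle2 b) (hb' : IsCircle2 b') (h : a ∩ b = {p}) (h' : a ∩ b' = {p}) (hne : b ≠ b') :
    b ∩ b' = {p} := by
  obtain ⟨c, r, hr, rfl⟩ := ha
  obtain ⟨_, _, -, rfl⟩ := hb
  obtain ⟨_, _, -, rfl⟩ := hb'
  exact sphere_inter_sphere_eq_singleton_trans hr h h' hne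

end Circles

lemma mul_four_mul_sqrt_add_le_rpow (n : ℕ) :
    ((n * (4 * (Nat.sqrt (8 * n) + 1) + 1) : ℕ) : ℝ) ≤ 17 * (n : ℝ) ^ ((3 : ℝ) / 2) := by
  rcases Nat.eq_zero_or_pos n with rfl | hn
  · simp
  have hn1 : (1 : ℝ) ≤ n := by exact_mod_cast hn
  have hsqrt : (Nat.sqrt (8 * n) : ℝ) ≤ 3 * √n := calc
    (Nat.sqrt (8 * n) : ℝ) ≤ √(8 * n : ℕ) := Real.nat_sqrt_le_real_sqrt
    _ ≤ √(3 ^ 2 * n) := Real.sqrt_le_sqrt (by push_cast; linarith)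
    _ = 3 * √n := by rw [Real.sqrt_mul (by positivity), Real.sqrt_sq (by positivity)]
  calc ((n * (4 * (Nat.sqrt (8 * n) + 1) + 1) : ℕ) : ℝ)
      = n * (4 * Nat.sqrt (8 * n) + 5) := by push_cast; ring
    _ ≤ n * (4 * (3 * √n) + 5 * √n) := by
      gcongr
      linarith [Real.one_le_sqrt.mpr hn1]
    _ = 17 * (n * √n) := by ring
    _ = 17 * (n : ℝ) ^ ((3 : ℝ) / 2) := by
      rw [show (3 : ℝ) / 2 = 1 + 1 / 2 by norm_num, Real.rpow_add (by positivity), Real.rpow_one,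
        Real.sqrt_eq_rpow]

theorem circle_tangent_pairs :
    ∃ A : ℝ, 0 < A ∧
      ∀ (n : ℕ) (C : Finset (Set Pt2)),
        C.card = n → (∀ s ∈ C, IsCircle2 s) →
        (¬ ∃ p : Pt2, ∃ c1 ∈ C, ∃ c2 ∈ C, ∃ c3 ∈ C,
            c1 ≠ c2 ∧ c1 ≠ c3 ∧ c2 ≠ c3 ∧
            c1 ∩ c2 = {p} ∧ c1 ∩ c3 = {p} ∧ c2 ∩ c3 = {p}) →
        (({s : Set (Set Pt2) | ∃ c1 ∈ C, ∃ c2 ∈ C, c1 ≠ c2 ∧ Tangent2 c1 c2 ∧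
            s = {c1, c2}}).ncard : ℝ) ≤ A * (n : ℝ) ^ ((3 : ℝ) / 2) := by
  refine ⟨17, by norm_num, ?_⟩
  rintro n C rfl hC htriple
  have hinj : ∀ c ∈ C, ∀ d ∈ C, ∀ d' ∈ C, ∀ p, c ∩ d = {p} → c ∩ d' = {p} → d = d' := by
    intro c hc d hd d' hd' p h h'
    by_contra hne
    exact htriple ⟨p, c, hc, d, hd, d', hd', (hC c hc).ne_of_inter_eq_singleton h,
      (hC c hc).ne_of_inter_eq_singleton h', hne, h, h',
      (hC c hc).inter_eq_singleton_trans (hC d hd) (hC d' hd') h h' hne⟩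
  have hpairs := encard_pairs_le_of_degenerate (fun _ _ => Tangent2.symm) C fun t ht hne =>
    exists_forall_card_tangent_le hne (fun s hs => hC s (ht hs))
      (fun c hc d hd d' hd' => hinj c (ht hc) d (ht hd) d' (ht hd'))
      ((Nat.mul_le_mul_left 8 (Finset.card_le_card ht)).trans_lt (Nat.lt_succ_sqrt' _))
  have hsub : {s : Set (Set Pt2) | ∃ c ∈ C, ∃ d ∈ C, c ≠ d ∧ Tangent2 c d ∧ s = {c, d}} ⊆
      {s | ∃ c ∈ C, ∃ d ∈ C, Tangent2 c d ∧ s = {c, d}} :=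
    fun _ ⟨c, hc, d, hd, _, h⟩ => ⟨c, hc, d, hd, h⟩
  have hcard := (Set.encard_le_coe_iff_finite_ncard_le.mp
    ((Set.encard_le_encard hsub).trans hpairs)).2
  exact (Nat.cast_le.mpr hcard).trans (mul_four_mul_sqrt_add_le_rpow C.card)
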